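/- Let Γ be a finite group of order n = s²−s for an integer s ≥ 2, and let S ⊆ Γ be a covering difference set of Γ with |S| = s. Then there exists an element g₀ ∈ Γ of order 2 such that g₀ has exactly two representations g₀ = t·u⁻¹ with t, u ∈ S and t ≠ u, and every other non-identity element g ∈ Γ (g ≠ 1, g ≠ g₀) has exactly one representation g = t·u⁻¹ with t, u ∈ S and t ≠ u. -/

import Mathlib

/-- The number of representations `g = t * u⁻¹` with distinct `t, u ∈ S`. -/
def offDiagReprCount {Γ : Type*} [Group Γ] [DecidableEq Γ] (S : Finset Γ) (g : Γ) : ℕ :=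
  ((S ×ˢ S).filter (fun p => p.1 ≠ p.2 ∧ p.1 * p.2⁻¹ = g)).card

theorem offDiagReprCount_inv {Γ : Type*} [Group Γ] [DecidableEq Γ] (S : Finset Γ) (g : Γ) :
    offDiagReprCount S g⁻¹ = offDiagReprCount S g := by
  refine Finset.card_bij' (fun p _ => p.swap) (fun p _ => p.swap) ?_ ?_ ?_ ?_
  · rintro ⟨t, u⟩ h
    simp only [Finset.mem_filter, Finset.mem_product, Prod.swap] at h ⊢
    refine ⟨h.1.symm, h.2.1.symm, ?_⟩
    rw [← inv_inj, ← h.2.2]; group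
  · rintro ⟨t, u⟩ h
    simp only [Finset.mem_filter, Finset.mem_product, Prod.swap] at h ⊢
    refine ⟨h.1.symm, h.2.1.symm, ?_⟩
    rw [← h.2.2]; group
  · simp
  · simp

theorem sum_offDiagReprCount {Γ : Type*} [Group Γ] [Fintype Γ] [DecidableEq Γ] (S : Finset Γ) :
    ∑ g ∈ Finset.univ.erase 1, offDiagReprCount S g = S.card * S.card - S.card := by
  rw [← Finset.offDiag_card, Finset.card_eq_sum_card_fiberwise
    (f := fun p : Γ × Γ => p.1 * p.2⁻¹) (t := Finset.univ.erase 1)]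
  · refine Finset.sum_congr rfl fun g _ => congrArg Finset.card ?_
    ext p
    simp only [Finset.mem_filter, Finset.mem_product, Finset.mem_offDiag]
    tauto
  · intro p hp
    have hne := (Finset.mem_offDiag.mp hp).2.2
    simpa [mul_inv_eq_one] using hne

/-- If natural numbers that are at least `1` sum to one more than their number, then one of them
is `2` and the others are `1`. -/
theorem Finset.exists_eq_two_of_sum_eq_card_add_one {α : Type*} [DecidableEq α] {A : Finset α}
    {f : α → ℕ} (hf : ∀ a ∈ A, 1 ≤ f a) (hsum : ∑ a ∈ A, f a = A.card + 1) :
    ∃ a ∈ A, f a = 2 ∧ ∀ b ∈ A, b ≠ a → f b = 1 := by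
  obtain ⟨a, ha, hlt⟩ : ∃ a ∈ A, 1 < f a :=
    Finset.exists_lt_of_sum_lt (by simp [hsum])
  have hsplit := Finset.add_sum_erase A f ha
  have hcard := Finset.card_erase_add_one ha
  have hle : ∀ b ∈ A.erase a, 1 ≤ f b := fun b hb => hf b (Finset.mem_of_mem_erase hb)
  have hrest : ∑ b ∈ A.erase a, 1 ≤ ∑ b ∈ A.erase a, f b := Finset.sum_le_sum hle
  have hones : ∑ b ∈ A.erase a, 1 = (A.erase a).card := by simp
  refine ⟨a, ha, by omega, fun b hb hba => ?_⟩
  exact ((Finset.sum_eq_sum_iff_of_le hle).mp (by omega) b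
    (Finset.mem_erase.mpr ⟨hba, hb⟩)).symm

/-- If `Γ` is a finite group of order `n = s²-s` (with `s ≥ 2`) and `S ⊆ Γ` is a covering
difference set of size `s`, then there is an element `g₀ ∈ Γ` of order 2 having exactly two
representations `g₀ = t·u⁻¹` with `t, u ∈ S`, `t ≠ u`, while every other non-identity
element of `Γ` has exactly one such representation. -/
theorem stmt_14 {Γ : Type*} [Group Γ] [Fintype Γ] [DecidableEq Γ]
    (s : ℕ) (hs : 2 ≤ s) (hcard : Fintype.card Γ = s ^ 2 - s)
    (S : Finset Γ) (hS : S.card = s)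
    (hcov : ∀ g : Γ, ∃ t ∈ S, ∃ u ∈ S, g = t * u⁻¹) :
    ∃ g₀ : Γ, orderOf g₀ = 2 ∧
      ((S ×ˢ S).filter (fun p => p.1 ≠ p.2 ∧ p.1 * p.2⁻¹ = g₀)).card = 2 ∧
      ∀ g : Γ, g ≠ 1 → g ≠ g₀ →
        ((S ×ˢ S).filter (fun p => p.1 ≠ p.2 ∧ p.1 * p.2⁻¹ = g)).card = 1 := by
  have hpos : ∀ g ∈ Finset.univ.erase (1 : Γ), 1 ≤ offDiagReprCount S g := by
    intro g hg
    obtain ⟨t, ht, u, hu, rfl⟩ := hcov g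
    refine Finset.card_pos.mpr ⟨(t, u), ?_⟩
    simpa [ht, hu, mul_inv_eq_one] using hg
  have hsum : ∑ g ∈ Finset.univ.erase (1 : Γ), offDiagReprCount S g =
      (Finset.univ.erase (1 : Γ)).card + 1 := by
    rw [sum_offDiagReprCount, Finset.card_erase_add_one (Finset.mem_univ _), Finset.card_univ,
      hcard, hS, sq]
  obtain ⟨g₀, hg₀, htwo, hone⟩ := Finset.exists_eq_two_of_sum_eq_card_add_one hpos hsum
  have hne : g₀ ≠ 1 := Finset.ne_of_mem_erase hg₀
  have hinv : g₀⁻¹ = g₀ := by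
    by_contra h
    have := hone g₀⁻¹ (by simpa using hne) h
    rw [offDiagReprCount_inv] at this
    omega
  refine ⟨g₀, orderOf_eq_prime ?_ hne, htwo, fun g hg hgg₀ => hone g (by simpa using hg) hgg₀⟩
  rw [sq, mul_eq_one_iff_eq_inv, hinv]
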